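/- Let (J, 𝒜) be a standard Borel space and let σ and ψ be finite nonnegative Borel measures on J × J, both symmetric (invariant under swapping the two coordinates). Then the following are equivalent: (1) for every ε > 0 there exists a multicommodity flow (φ_{st})_{(s,t) ∈ J×J} for the demand measure σ whose overload over ψ is less than ε, i.e. sup over Borel S ⊆ J × J of (φ_F(S) − ψ(S)) taken in total variation, ‖(φ_F − ψ)₊‖ < ε, where φ_F(S) = ∫_{J×J} φ_{st}(S) dσ(s,t) is the total load; (2) D(σ) ≤ D(ψ) for every metrical bounded linear functional D on the space of finite signed Borel measures on J × J. -/

import Mathlib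

open MeasureTheory Set
open scoped ENNReal

/-- A bounded linear functional `D` on the space of finite signed Borel measures on `J × J`
(with the total variation norm) is *metrical* if: it vanishes on measures concentrated on the
diagonal; it is invariant under swapping the two coordinates; and it satisfies the triangle
inequality `D(κ¹²) + D(κ²³) ≥ D(κ¹³)` for every finite nonnegative measure `κ` on `J³`. -/
def IsMetrical {J : Type*} [MeasurableSpace J]
    (D : SignedMeasure (J × J) →ₗ[ℝ] ℝ) : Prop :=
  (∃ C : ℝ, ∀ μ : SignedMeasure (J × J), |D μ| ≤ C * (μ.totalVariation univ).toReal) ∧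
  (∀ μ : SignedMeasure (J × J), μ.totalVariation {p : J × J | p.1 = p.2}ᶜ = 0 → D μ = 0) ∧
  (∀ μ : SignedMeasure (J × J), D (μ.map Prod.swap) = D μ) ∧
  (∀ (κ : Measure (J × J × J)) [IsFiniteMeasure κ],
    D ((κ.map fun t => (t.1, t.2.2)).toSignedMeasure) ≤
      D ((κ.map fun t => (t.1, t.2.1)).toSignedMeasure) +
        D ((κ.map fun t => t.2).toSignedMeasure))

/-!
(1) ⇒ (2): a flow `φ` from `s` to `t` moves `δ_s` to `δ_t`, so by the triangle inequality a metrical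
functional is at least as large on the total load as on the demand. Since it is nonnegative on
measures and bounded, its value on the load exceeds its value on `ψ` by at most a multiple of the
overload.

(2) ⇒ (1): the total loads of flows for `σ` form a convex set. If the overload is at least `ε > 0`
on all of it, the Mazur–Orlicz theorem yields a positive linear cost `l` with `l ν ≥ l ψ + ε` for
every load `ν`. The least cost of routing a demand is linear in the demand, and it satisfies the
triangle inequality because flows concatenate (after disintegrating over the middle vertex).
Symmetrised and extended to signed measures, it is a metrical functional that violates (2).
-/

open ProbabilityTheory
open scoped NNReal Pointwise

section MazurOrlicz

variable {E : Type*} [AddCommGroup E] [Module ℝ E] {N : E → ℝ} {A : Set E}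

/-- The convex cone in `E × ℝ` whose nonnegative functionals `(x, r) ↦ r - L x` are given by the
linear `L ≤ N` with `c ≤ L` on `A`. -/
def mazurOrliczCone (N_hom : ∀ r : ℝ, 0 ≤ r → ∀ x, N (r • x) = r * N x)
    (N_add : ∀ x y, N (x + y) ≤ N x + N y) (A_convex : Convex ℝ A) (A_nonempty : A.Nonempty)
    (c : ℝ) : PointedCone ℝ (E × ℝ) where
  carrier := {x | ∃ t : ℝ, 0 ≤ t ∧ ∃ a ∈ A, N (x.1 + t • a) ≤ x.2 + t * c}
  zero_mem' := by
    obtain ⟨a, ha⟩ := A_nonempty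
    have N_zero := N_hom 0 le_rfl 0
    exact ⟨0, le_rfl, a, ha, by simpa using N_zero.le⟩
  add_mem' := by
    rintro ⟨x, r⟩ ⟨y, r'⟩ ⟨t, ht, a, ha, hx⟩ ⟨t', ht', b, hb, hy⟩
    obtain ⟨d, hd, hd_eq⟩ : t • a + t' • b ∈ (t + t') • A := by
      rw [A_convex.add_smul ht ht']
      exact add_mem_add (smul_mem_smul_set ha) (smul_mem_smul_set hb)
    refine ⟨t + t', add_nonneg ht ht', d, hd, ?_⟩
    change N (x + y + (t + t') • d) ≤ r + r' + (t + t') * c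
    have hxy := N_add (x + t • a) (y + t' • b)
    rw [add_add_add_comm, ← hd_eq] at hxy
    dsimp only at hx hy hxy
    linarith
  smul_mem' := by
    rintro ⟨s, hs⟩ ⟨x, r⟩ ⟨t, ht, a, ha, hx⟩
    refine ⟨s * t, mul_nonneg hs ht, a, ha, ?_⟩
    change N (s • x + (s * t) • a) ≤ s * r + s * t * c
    rw [mul_smul, ← smul_add, mul_assoc, ← mul_add, N_hom s hs]
    exact mul_le_mul_of_nonneg_left hx hs

theorem exists_linearMap_le_sublinear_of_convex
    (N_hom : ∀ r : ℝ, 0 ≤ r → ∀ x, N (r • x) = r * N x)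
    (N_add : ∀ x y, N (x + y) ≤ N x + N y) (A_convex : Convex ℝ A) (A_nonempty : A.Nonempty)
    {c : ℝ} (hc : ∀ a ∈ A, c ≤ N a) :
    ∃ L : E →ₗ[ℝ] ℝ, (∀ x, L x ≤ N x) ∧ ∀ a ∈ A, c ≤ L a := by
  set K := mazurOrliczCone N_hom N_add A_convex A_nonempty c
  have N_zero : N 0 = 0 := by simpa using N_hom 0 le_rfl 0
  have mem_K_of_le {x : E} {r : ℝ} (h : N x ≤ r) : (x, r) ∈ K := by
    obtain ⟨a, ha⟩ := A_nonempty
    exact ⟨0, le_rfl, a, ha, by simpa using h⟩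
  have nonneg_of_mem_K {r : ℝ} : ((0 : E), r) ∈ K → 0 ≤ r := by
    rintro ⟨t, ht, a, ha, h⟩
    rw [zero_add, N_hom t ht] at h
    linarith [mul_le_mul_of_nonneg_left (hc a ha) ht]
  obtain ⟨g, hg_snd, hg_nonneg⟩ := riesz_extension K
    ((LinearMap.snd ℝ E ℝ).toPMap (Submodule.prod ⊥ ⊤))
    (fun ⟨⟨x, r⟩, hx, _⟩ hK ↦ by
      obtain rfl : x = 0 := hx
      exact nonneg_of_mem_K hK)
    (fun ⟨x, r⟩ ↦ ⟨⟨(0, N x - r), by simp⟩, mem_K_of_le (by simp)⟩)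
  have hg (x : E) (r : ℝ) : g (x, r) = g (x, 0) + r := by
    have hg_zero : g (0, r) = r := hg_snd ⟨(0, r), by simp⟩
    rw [show (x, r) = (x, 0) + (0, r) by simp, map_add, hg_zero]
  refine ⟨-(g ∘ₗ LinearMap.inl ℝ E ℝ), fun x ↦ ?_, fun a ha ↦ ?_⟩
  · have hx : 0 ≤ g (x, 0) + N x := hg x (N x) ▸ hg_nonneg _ (mem_K_of_le le_rfl)
    exact neg_le_iff_add_nonneg'.mpr hx
  · have hK : (-a, -c) ∈ K := ⟨1, zero_le_one, a, ha, by simp [N_zero]⟩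
    have ha : 0 ≤ g (-(a, 0)) + -c := by simpa [← hg] using hg_nonneg _ hK
    rw [map_neg, ← sub_eq_add_neg] at ha
    exact sub_nonneg.mp ha

end MazurOrlicz

section SignedMeasures

variable {X Y : Type*} [MeasurableSpace X] [MeasurableSpace Y]

theorem measure_add_sub_comm (μ ν : Measure X) [IsFiniteMeasure μ] [IsFiniteMeasure ν] :
    μ + (ν - μ) = ν + (μ - ν) := by
  rw [← Measure.toSignedMeasure_eq_toSignedMeasure_iff, Measure.toSignedMeasure_add,
    Measure.toSignedMeasure_add, add_comm ν.toSignedMeasure, ← sub_eq_sub_iff_add_eq_add]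
  exact Measure.sub_toSignedMeasure_eq_toSignedMeasure_sub

theorem iSup_sub_eq_sub_apply_univ (μ ν : Measure X) [IsFiniteMeasure μ] [IsFiniteMeasure ν] :
    ⨆ (S : Set X) (_ : MeasurableSet S), (μ S - ν S) = (μ - ν) univ := by
  have apply_add (S : Set X) : μ S + (ν - μ) S = ν S + (μ - ν) S :=
    DFunLike.congr_fun (measure_add_sub_comm μ ν) S
  refine le_antisymm (iSup₂_le fun S _ ↦ ?_) ?_
  · have hS : μ S ≤ ν S + (μ - ν) S := apply_add S ▸ le_self_add
    exact (tsub_le_iff_left.mpr hS).trans (measure_mono (subset_univ S))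
  · obtain ⟨S, hS, h_pos, h_neg⟩ := Measure.mutually_singular_measure_sub (μ := μ) (ν := ν)
    have hSc : μ Sᶜ = ν Sᶜ + (μ - ν) Sᶜ := by rw [← apply_add, h_neg, add_zero]
    calc (μ - ν) univ = μ Sᶜ - ν Sᶜ := by
          rw [hSc, ENNReal.add_sub_cancel_left (measure_ne_top ν _), ← measure_add_measure_compl hS,
            h_pos, zero_add]
      _ ≤ _ := le_iSup₂ (f := fun S _ ↦ μ S - ν S) Sᶜ hS.compl

theorem map_map_finiteMeasure {Z : Type*} [MeasurableSpace Z] (μ : FiniteMeasure X) {f : X → Y}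
    {g : Y → Z} (hf : Measurable f) (hg : Measurable g) : (μ.map f).map g = μ.map (g ∘ f) :=
  FiniteMeasure.toMeasure_injective (Measure.map_map hg hf)

/-- The inclusion of finite measures into signed measures. -/
noncomputable def toSignedMeasureₗ : FiniteMeasure X →ₗ[ℝ≥0] SignedMeasure X where
  toFun μ := (μ : Measure X).toSignedMeasure
  map_add' μ ν := by simp only [FiniteMeasure.toMeasure_add, Measure.toSignedMeasure_add]
  map_smul' r μ := by
    simp only [FiniteMeasure.toMeasure_smul, Measure.toSignedMeasure_smul, RingHom.id_apply]

theorem totalVariation_toSignedMeasureₗ (μ : FiniteMeasure X) :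
    (toSignedMeasureₗ μ).totalVariation = μ := by
  rw [SignedMeasure.totalVariation_eq_variation]
  exact Measure.variation_toSignedMeasure

theorem map_toSignedMeasureₗ (μ : FiniteMeasure X) {f : X → Y} (hf : Measurable f) :
    (toSignedMeasureₗ μ).map f = toSignedMeasureₗ (μ.map f) := by
  ext S hS
  rw [VectorMeasure.map_apply _ hf hS]
  change (μ : Measure X).toSignedMeasure _ = ((μ : Measure X).map f).toSignedMeasure S
  rw [Measure.toSignedMeasure_apply_measurable hS, Measure.toSignedMeasure_apply_measurable (hf hS),
    map_measureReal_apply hf hS]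

theorem toSignedMeasureₗ_injective :
    Function.Injective (toSignedMeasureₗ : FiniteMeasure X → SignedMeasure X) := fun μ ν h ↦
  FiniteMeasure.toMeasure_injective
    ((Measure.toSignedMeasure_eq_toSignedMeasure_iff (μ := (μ : Measure X)) (ν := ν)).mp h)

/-- The positive part in the Jordan decomposition, as a finite measure. -/
noncomputable def positivePart (s : SignedMeasure X) : FiniteMeasure X :=
  ⟨s.toJordanDecomposition.posPart, inferInstance⟩

/-- The negative part in the Jordan decomposition, as a finite measure. -/
noncomputable def negativePart (s : SignedMeasure X) : FiniteMeasure X :=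
  ⟨s.toJordanDecomposition.negPart, inferInstance⟩

theorem toSignedMeasureₗ_positivePart_sub_negativePart (s : SignedMeasure X) :
    toSignedMeasureₗ (positivePart s) - toSignedMeasureₗ (negativePart s) = s :=
  s.toSignedMeasure_toJordanDecomposition

theorem positivePart_toSignedMeasureₗ_sub (μ ν : FiniteMeasure X) :
    (positivePart (toSignedMeasureₗ μ - toSignedMeasureₗ ν) : Measure X) = μ - ν :=
  congrArg JordanDecomposition.posPart Measure.toJordanDecomposition_toSignedMeasure_sub

/-- The total mass of the positive part of a signed measure: a sublinear functional, which measures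
the excess of one measure over another. -/
noncomputable def positiveMass (s : SignedMeasure X) : ℝ :=
  (positivePart s : Measure X).real univ

theorem positiveMass_toSignedMeasureₗ_sub (μ ν : FiniteMeasure X) :
    positiveMass (toSignedMeasureₗ μ - toSignedMeasureₗ ν) = (μ - ν : Measure X).real univ := by
  rw [positiveMass, positivePart_toSignedMeasureₗ_sub]

theorem positiveMass_add_le (s t : SignedMeasure X) :
    positiveMass (s + t) ≤ positiveMass s + positiveMass t := by
  have hst : s + t = toSignedMeasureₗ (positivePart s + positivePart t) -
      toSignedMeasureₗ (negativePart s + negativePart t) := by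
    rw [map_add, map_add, add_sub_add_comm, toSignedMeasureₗ_positivePart_sub_negativePart,
      toSignedMeasureₗ_positivePart_sub_negativePart]
  rw [hst, positiveMass_toSignedMeasureₗ_sub, positiveMass, positiveMass, ← measureReal_add_apply]
  exact ENNReal.toReal_mono (measure_ne_top _ _) (Measure.sub_le univ)

theorem positiveMass_smul {r : ℝ} (hr : 0 ≤ r) (s : SignedMeasure X) :
    positiveMass (r • s) = r * positiveMass s := by
  have h_smul : (positivePart (r • s) : Measure X) = r.toNNReal • (positivePart s : Measure X) :=
    (congrArg _ (s.toJordanDecomposition_smul_real r)).trans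
      (JordanDecomposition.real_smul_posPart_nonneg _ _ hr)
  rw [positiveMass, h_smul, measureReal_nnreal_smul_apply, Real.coe_toNNReal _ hr, positiveMass]

theorem convex_image_toSignedMeasureₗ_sub {A : Set (FiniteMeasure X)} (hA : Convex ℝ≥0 A)
    (ψ : FiniteMeasure X) :
    Convex ℝ ((fun ν ↦ toSignedMeasureₗ ν - toSignedMeasureₗ ψ) '' A) := by
  rintro _ ⟨μ, hμ, rfl⟩ _ ⟨ν, hν, rfl⟩ a b ha hb hab
  lift a to ℝ≥0 using ha
  lift b to ℝ≥0 using hb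
  have weights_sum : a + b = 1 := mod_cast hab
  refine ⟨a • μ + b • ν, hA hμ hν zero_le zero_le weights_sum, ?_⟩
  change toSignedMeasureₗ (a • μ + b • ν) - _ =
    a • (toSignedMeasureₗ μ - _) + b • (toSignedMeasureₗ ν - _)
  rw [smul_sub, smul_sub, sub_add_sub_comm, ← add_smul, weights_sum, one_smul, map_add, map_smul,
    map_smul]

/-- A real linear functional on signed measures that is nonnegative on measures, restricted to
finite measures. -/
noncomputable def restrictFiniteMeasure (L : SignedMeasure X →ₗ[ℝ] ℝ)
    (hL : ∀ μ, 0 ≤ L (toSignedMeasureₗ μ)) : FiniteMeasure X →ₗ[ℝ≥0] ℝ≥0 where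
  toFun μ := ⟨L (toSignedMeasureₗ μ), hL μ⟩
  map_add' μ ν := NNReal.eq (by simp only [map_add]; rfl)
  map_smul' r μ := NNReal.eq (by
    simp only [map_smul, NNReal.smul_def, RingHom.id_apply]; rfl)

theorem exists_linearMap_forall_add_le {A : Set (FiniteMeasure X)} (A_convex : Convex ℝ≥0 A)
    (A_nonempty : A.Nonempty) (ψ : FiniteMeasure X) {c : ℝ≥0}
    (hc : ∀ ν ∈ A, c ≤ (ν - ψ : Measure X).real univ) :
    ∃ l : FiniteMeasure X →ₗ[ℝ≥0] ℝ≥0, (∀ μ, l μ ≤ μ.mass) ∧ ∀ ν ∈ A, l ψ + c ≤ l ν := by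
  obtain ⟨L, hL_le, hL_ge⟩ := exists_linearMap_le_sublinear_of_convex
    (fun _ ↦ positiveMass_smul) positiveMass_add_le
    (convex_image_toSignedMeasureₗ_sub A_convex ψ) (A_nonempty.image _)
    (forall_mem_image.mpr fun ν hν ↦ positiveMass_toSignedMeasureₗ_sub ν ψ ▸ hc ν hν)
  have L_sub_le (μ ν : FiniteMeasure X) : L (toSignedMeasureₗ μ) - L (toSignedMeasureₗ ν) ≤
      (μ - ν : Measure X).real univ := by
    rw [← map_sub, ← positiveMass_toSignedMeasureₗ_sub]
    exact hL_le _
  have L_nonneg (μ : FiniteMeasure X) : 0 ≤ L (toSignedMeasureₗ μ) := by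
    simpa [Measure.zero_sub] using L_sub_le 0 μ
  have L_le_mass (μ : FiniteMeasure X) : L (toSignedMeasureₗ μ) ≤ μ.mass := by
    simpa [FiniteMeasure.mass, Measure.sub_zero] using L_sub_le μ 0
  refine ⟨restrictFiniteMeasure L L_nonneg, L_le_mass, fun ν hν ↦ NNReal.coe_le_coe.mp ?_⟩
  exact le_sub_iff_add_le'.mp (map_sub L _ _ ▸ hL_ge _ (mem_image_of_mem _ hν))

theorem coe_sub_coe_eq_of_toSignedMeasureₗ_sub_eq (l : FiniteMeasure X →ₗ[ℝ≥0] ℝ≥0)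
    {μ ν μ' ν' : FiniteMeasure X}
    (h : toSignedMeasureₗ μ - toSignedMeasureₗ ν = toSignedMeasureₗ μ' - toSignedMeasureₗ ν') :
    (l μ - l ν : ℝ) = l μ' - l ν' := by
  rw [sub_eq_sub_iff_add_eq_add, ← map_add, ← map_add] at h
  rw [sub_eq_sub_iff_add_eq_add, ← NNReal.coe_add, ← NNReal.coe_add, ← map_add, ← map_add,
    toSignedMeasureₗ_injective h]

/-- The extension of a linear functional on finite measures to signed measures, through the
Jordan decomposition. -/
noncomputable def signedExtension (l : FiniteMeasure X →ₗ[ℝ≥0] ℝ≥0) : SignedMeasure X →ₗ[ℝ] ℝ where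
  toFun s := l (positivePart s) - l (negativePart s)
  map_add' s t := by
    rw [coe_sub_coe_eq_of_toSignedMeasureₗ_sub_eq l (μ' := positivePart s + positivePart t)
      (ν' := negativePart s + negativePart t)]
    · simp only [map_add, NNReal.coe_add]
      ring
    · simp only [map_add, add_sub_add_comm, toSignedMeasureₗ_positivePart_sub_negativePart]
  map_smul' r s := by
    obtain ⟨p, q, rfl⟩ : ∃ p q : ℝ≥0, r = p - q :=
      ⟨⟨r⁺, posPart_nonneg r⟩, ⟨r⁻, negPart_nonneg r⟩, (posPart_sub_negPart r).symm⟩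
    rw [coe_sub_coe_eq_of_toSignedMeasureₗ_sub_eq l (μ' := p • positivePart s + q • negativePart s)
      (ν' := q • positivePart s + p • negativePart s)]
    · simp only [map_add, map_smul, smul_eq_mul, NNReal.coe_add, NNReal.coe_mul, RingHom.id_apply]
      ring
    · rw [toSignedMeasureₗ_positivePart_sub_negativePart, sub_smul]
      nth_rw 1 2 [← toSignedMeasureₗ_positivePart_sub_negativePart s]
      simp only [map_add, map_smul, smul_sub, NNReal.smul_def]
      abel

theorem signedExtension_toSignedMeasureₗ (l : FiniteMeasure X →ₗ[ℝ≥0] ℝ≥0) (μ : FiniteMeasure X) :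
    signedExtension l (toSignedMeasureₗ μ) = l μ := by
  have h : toSignedMeasureₗ (positivePart (toSignedMeasureₗ μ)) -
      toSignedMeasureₗ (negativePart (toSignedMeasureₗ μ)) =
        toSignedMeasureₗ μ - toSignedMeasureₗ 0 := by
    rw [toSignedMeasureₗ_positivePart_sub_negativePart, map_zero, sub_zero]
  refine (coe_sub_coe_eq_of_toSignedMeasureₗ_sub_eq l h).trans ?_
  rw [map_zero, NNReal.coe_zero, sub_zero]

theorem abs_signedExtension_le {l : FiniteMeasure X →ₗ[ℝ≥0] ℝ≥0} {C : ℝ≥0}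
    (hl : ∀ μ, l μ ≤ C * μ.mass) (s : SignedMeasure X) :
    |signedExtension l s| ≤ C * (s.totalVariation univ).toReal := by
  have totalVariation_mass : (s.totalVariation univ).toReal =
      (positivePart s).mass + (negativePart s).mass :=
    ENNReal.toReal_add (measure_ne_top _ _) (measure_ne_top _ _)
  calc |signedExtension l s|
      ≤ |(l (positivePart s) : ℝ)| + |(l (negativePart s) : ℝ)| := abs_sub _ _
    _ ≤ C * (positivePart s).mass + C * (negativePart s).mass := by
      rw [NNReal.abs_eq, NNReal.abs_eq]
      exact_mod_cast add_le_add (hl _) (hl _)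
    _ = C * (s.totalVariation univ).toReal := by rw [totalVariation_mass, mul_add]

theorem linearMap_ext_of_toSignedMeasureₗ {M : Type*} [AddCommGroup M] [Module ℝ M]
    {D D' : SignedMeasure X →ₗ[ℝ] M}
    (h : ∀ μ : FiniteMeasure X, D (toSignedMeasureₗ μ) = D' (toSignedMeasureₗ μ)) : D = D' := by
  ext s
  rw [← toSignedMeasureₗ_positivePart_sub_negativePart s, map_sub, map_sub, h, h]

end SignedMeasures

section Kernels

variable {α β : Type*} [MeasurableSpace α] [MeasurableSpace β]

theorem comp_map_eq_comap_comp {γ : Type*} [MeasurableSpace γ] (κ : Kernel β γ) (μ : Measure α)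
    {f : α → β} (hf : Measurable f) : κ ∘ₘ μ.map f = κ.comap f hf ∘ₘ μ := by
  rw [← Measure.deterministic_comp_eq_map hf, Measure.comp_assoc,
    Kernel.comp_deterministic_eq_comap]

theorem isSFiniteKernel_of_forall_isFiniteMeasure (κ : Kernel α β)
    (h : ∀ a, IsFiniteMeasure (κ a)) : IsSFiniteKernel κ := by
  let level (n : ℕ) : Set α := {a | ⌊(κ a univ).toNNReal⌋₊ = n}
  have measurableSet_level (n : ℕ) : MeasurableSet (level n) :=
    measurableSet_eq_fun
      (Nat.measurable_floor.comp (κ.measurable_coe MeasurableSet.univ).ennreal_toNNReal)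
      measurable_const
  let piece (n : ℕ) : Kernel α β := by
    classical exact Kernel.piecewise (measurableSet_level n) κ 0
  have isFiniteKernel_piece (n : ℕ) : IsFiniteKernel (piece n) := by
    refine ⟨(n + 1 : ℝ≥0), ENNReal.coe_lt_top, fun a ↦ ?_⟩
    rw [Kernel.piecewise_apply]
    split_ifs with ha
    · rw [← ENNReal.coe_toNNReal (measure_ne_top (κ a) univ), ENNReal.coe_le_coe]
      exact (Nat.lt_floor_add_one _).le.trans_eq (by rw [ha])
    · simp
  have sum_piece : Kernel.sum piece = κ := by
    ext a S hS
    rw [Kernel.sum_apply' _ _ hS, tsum_eq_single ⌊(κ a univ).toNNReal⌋₊]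
    · simp [piece, level, Kernel.piecewise_apply]
    · intro n hn
      simp [piece, level, Kernel.piecewise_apply, hn.symm]
  rw [← sum_piece]
  infer_instance

end Kernels

section Flows

variable {J : Type*} [MeasurableSpace J]

/-- The measure `φ` on edges is an `s`-`t` flow of value `1`. The condition
`φ¹ - φ² = δ_s - δ_t` is written without subtraction. -/
def IsUnitFlow (s t : J) (φ : Measure (J × J)) : Prop :=
  φ.fst + Measure.dirac t = φ.snd + Measure.dirac s

namespace IsUnitFlow

theorem dirac (s t : J) : IsUnitFlow s t (Measure.dirac (s, t)) := by
  rw [IsUnitFlow, Measure.fst, Measure.snd, Measure.map_dirac' measurable_fst,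
    Measure.map_dirac' measurable_snd, add_comm]

theorem zero (s : J) : IsUnitFlow s s (0 : Measure (J × J)) := by
  simp [IsUnitFlow]

theorem add {s t u : J} {φ φ' : Measure (J × J)} (hφ : IsUnitFlow s u φ)
    (hφ' : IsUnitFlow u t φ') : IsUnitFlow s t (φ + φ') := by
  have h : (φ + φ').fst + Measure.dirac t + Measure.dirac u =
      (φ + φ').snd + Measure.dirac s + Measure.dirac u := by
    rw [Measure.fst_add, Measure.snd_add]
    calc φ.fst + φ'.fst + Measure.dirac t + Measure.dirac u
        = (φ.fst + Measure.dirac u) + (φ'.fst + Measure.dirac t) := by abel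
      _ = (φ.snd + Measure.dirac s) + (φ'.snd + Measure.dirac u) := by rw [hφ, hφ']
      _ = φ.snd + φ'.snd + Measure.dirac s + Measure.dirac u := by abel
  rw [IsUnitFlow, ← Measure.add_sub_cancel (μ := _ + Measure.dirac t) (ν := Measure.dirac u), h,
    Measure.add_sub_cancel]

theorem comp {s t : J} {Y : Type*} [MeasurableSpace Y] {Φ : Kernel Y (J × J)}
    (hΦ : ∀ y, IsUnitFlow s t (Φ y)) (π : Measure Y) [IsProbabilityMeasure π] :
    IsUnitFlow s t (Φ ∘ₘ π) := by
  have h : Φ.map Prod.fst + Kernel.const Y (Measure.dirac t) =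
      Φ.map Prod.snd + Kernel.const Y (Measure.dirac s) := by
    ext1 y
    rw [add_apply, add_apply, Kernel.map_apply _ measurable_fst, Kernel.map_apply _ measurable_snd]
    exact hΦ y
  have h_comp := congrArg (fun κ : Kernel Y J ↦ κ ∘ₘ π) h
  simpa only [IsUnitFlow, Measure.fst, Measure.snd, Measure.add_comp, Measure.const_comp,
    measure_univ, one_smul, ← Measure.map_comp π Φ measurable_fst,
    ← Measure.map_comp π Φ measurable_snd] using h_comp

end IsUnitFlow

/-- `ν` is the total load of a multicommodity flow for the demand `μ`. The individual flows need not
be finite here; see `Routes.exists_isFiniteMeasure`. -/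
def Routes (μ ν : FiniteMeasure (J × J)) : Prop :=
  ∃ φ : Kernel (J × J) (J × J), (∀ p, IsUnitFlow p.1 p.2 (φ p)) ∧ φ ∘ₘ (μ : Measure (J × J)) = ν

namespace Routes

theorem exists_isFiniteMeasure {μ ν : FiniteMeasure (J × J)} (h : Routes μ ν) :
    ∃ φ : Kernel (J × J) (J × J), (∀ p, IsFiniteMeasure (φ p)) ∧
      (∀ p, IsUnitFlow p.1 p.2 (φ p)) ∧ φ ∘ₘ (μ : Measure (J × J)) = ν := by
  classical
  obtain ⟨φ, hφ, hν⟩ := h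
  have measurableSet_finite : MeasurableSet {p | φ p univ < ∞} :=
    measurableSet_lt (φ.measurable_coe MeasurableSet.univ) measurable_const
  let φ' : Kernel (J × J) (J × J) := Kernel.piecewise measurableSet_finite φ Kernel.id
  have φ'_ae_eq : φ' =ᵐ[(μ : Measure (J × J))] φ := by
    have mass_finite : ∫⁻ p, φ p univ ∂(μ : Measure (J × J)) ≠ ∞ := by
      rw [← Measure.bind_apply MeasurableSet.univ φ.aemeasurable, hν]
      exact measure_ne_top _ _
    filter_upwards [ae_lt_top (φ.measurable_coe MeasurableSet.univ) mass_finite] with p hp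
    exact (Kernel.piecewise_apply ..).trans (if_pos hp)
  refine ⟨φ', fun p ↦ ?_, fun p ↦ ?_, (Measure.comp_congr φ'_ae_eq).trans hν⟩
  · rw [Kernel.piecewise_apply]
    split_ifs with hp
    exacts [⟨hp⟩, inferInstance]
  · rw [Kernel.piecewise_apply]
    split_ifs
    exacts [hφ p, IsUnitFlow.dirac p.1 p.2]

/-- The flows `Φ` are averaged over the conditional distribution of `Y` given the demand. -/
theorem of_mixture {Y : Type*} [MeasurableSpace Y] [StandardBorelSpace Y]
    {ρ : Measure ((J × J) × Y)} [IsFiniteMeasure ρ] {Φ : Kernel ((J × J) × Y) (J × J)}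
    (hΦ : ∀ q, IsUnitFlow q.1.1 q.1.2 (Φ q)) {μ ν : FiniteMeasure (J × J)}
    (hμ : ρ.fst = μ) (hν : Φ ∘ₘ ρ = ν) : Routes μ ν := by
  rcases isEmpty_or_nonempty Y with hY | hY
  · have hρ : ρ = 0 := Measure.eq_zero_of_isEmpty ρ
    refine ⟨Kernel.id, fun p ↦ IsUnitFlow.dirac p.1 p.2, ?_⟩
    rw [← hμ, ← hν, hρ]
    simp
  refine ⟨Φ ∘ₖ (Kernel.id ×ₖ ρ.condKernel), fun p ↦ ?_, ?_⟩
  · have comp_prod_eq : (Φ ∘ₖ (Kernel.id ×ₖ ρ.condKernel)) p =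
        Φ.comap (Prod.mk p) measurable_prodMk_left ∘ₘ ρ.condKernel p := by
      rw [Kernel.comp_apply, Kernel.prod_apply, Kernel.id_apply, Measure.dirac_prod,
        ← Kernel.comp_deterministic_eq_comap, ← Measure.comp_assoc,
        Measure.deterministic_comp_eq_map]
    rw [comp_prod_eq]
    have isUnitFlow_comap (y : Y) :
        IsUnitFlow p.1 p.2 (Φ.comap (Prod.mk p) measurable_prodMk_left y) := by
      rw [Kernel.comap_apply]
      exact hΦ (p, y)
    exact IsUnitFlow.comp isUnitFlow_comap (ρ.condKernel p)
  · calc (Φ ∘ₖ (Kernel.id ×ₖ ρ.condKernel)) ∘ₘ (μ : Measure (J × J))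
        = Φ ∘ₘ (ρ.fst ⊗ₘ ρ.condKernel) := by
          rw [← hμ, ← Measure.comp_assoc, ← Measure.compProd_eq_comp_prod]
      _ = ν := by rw [ρ.disintegrate ρ.condKernel]; exact hν

theorem refl (μ : FiniteMeasure (J × J)) : Routes μ μ :=
  ⟨Kernel.id, fun p ↦ IsUnitFlow.dirac p.1 p.2, Measure.id_comp⟩

theorem add {μ μ' ν ν' : FiniteMeasure (J × J)} (h : Routes μ ν) (h' : Routes μ' ν') :
    Routes (μ + μ') (ν + ν') := by
  classical
  obtain ⟨φ, hφ, hν⟩ := h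
  obtain ⟨φ', hφ', hν'⟩ := h'
  have measurableSet_true : MeasurableSet {q : (J × J) × Bool | q.2 = true} :=
    measurable_snd (measurableSet_singleton true)
  let Φ : Kernel ((J × J) × Bool) (J × J) :=
    Kernel.piecewise measurableSet_true (φ.comap Prod.fst measurable_fst)
      (φ'.comap Prod.fst measurable_fst)
  have comap_true : Φ.comap (·, true) measurable_prodMk_right = φ := by
    ext1 p
    simp [Φ, Kernel.piecewise_apply]
  have comap_false : Φ.comap (·, false) measurable_prodMk_right = φ' := by
    ext1 p
    simp [Φ, Kernel.piecewise_apply]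
  refine of_mixture (Φ := Φ) (ρ := (μ : Measure (J × J)).map (·, true) +
    (μ' : Measure (J × J)).map (·, false)) ?_ ?_ ?_
  · rintro ⟨p, _ | _⟩
    · simpa [Φ, Kernel.piecewise_apply] using hφ' p
    · simpa [Φ, Kernel.piecewise_apply] using hφ p
  · rw [Measure.fst_add, Measure.fst_map_prodMk measurable_const,
      Measure.fst_map_prodMk measurable_const, Measure.map_id', Measure.map_id',
      FiniteMeasure.toMeasure_add]
  · rw [Measure.comp_add, comp_map_eq_comap_comp _ _ measurable_prodMk_right,
      comp_map_eq_comap_comp _ _ measurable_prodMk_right, comap_true, comap_false, hν, hν',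
      FiniteMeasure.toMeasure_add]

theorem smul {μ ν : FiniteMeasure (J × J)} (r : ℝ≥0) (h : Routes μ ν) :
    Routes (r • μ) (r • ν) := by
  obtain ⟨φ, hφ, hν⟩ := h
  refine ⟨φ, hφ, ?_⟩
  calc φ ∘ₘ ((r • μ : FiniteMeasure (J × J)) : Measure (J × J))
      = φ ∘ₘ ((r : ℝ≥0∞) • (μ : Measure (J × J))) := rfl
    _ = (r : ℝ≥0∞) • (ν : Measure (J × J)) := by rw [Measure.comp_smul, hν]

theorem convex (μ : FiniteMeasure (J × J)) : Convex ℝ≥0 {ν | Routes μ ν} := by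
  intro ν hν ν' hν' a b _ _ hab
  have h := (hν.smul a).add (hν'.smul b)
  rwa [← add_smul, hab, one_smul] at h

theorem exists_add_of_add {μ μ' ν : FiniteMeasure (J × J)} (h : Routes (μ + μ') ν) :
    ∃ ν₁ ν₂, Routes μ ν₁ ∧ Routes μ' ν₂ ∧ ν₁ + ν₂ = ν := by
  obtain ⟨φ, hφ, hν⟩ := h
  rw [FiniteMeasure.toMeasure_add, Measure.comp_add] at hν
  have load_le : φ ∘ₘ (μ : Measure (J × J)) ≤ ν := hν ▸ Measure.le_add_right le_rfl
  have load_le' : φ ∘ₘ (μ' : Measure (J × J)) ≤ ν := hν ▸ Measure.le_add_left le_rfl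
  exact ⟨⟨_, isFiniteMeasure_of_le _ load_le⟩, ⟨_, isFiniteMeasure_of_le _ load_le'⟩,
    ⟨φ, hφ, rfl⟩, ⟨φ, hφ, rfl⟩, FiniteMeasure.toMeasure_injective hν⟩

theorem zero_of_diagonal [MeasurableEq J] {μ : FiniteMeasure (J × J)}
    (hμ : (μ : Measure (J × J)) {p | p.1 = p.2}ᶜ = 0) : Routes μ 0 := by
  classical
  let φ : Kernel (J × J) (J × J) := Kernel.piecewise measurableSet_diagonal 0 Kernel.id
  have φ_ae_eq : φ =ᵐ[(μ : Measure (J × J))] (0 : Kernel (J × J) (J × J)) := by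
    filter_upwards [compl_mem_ae_iff.mpr hμ] with p hp
    exact (Kernel.piecewise_apply ..).trans (if_pos (not_not.mp hp))
  refine ⟨φ, fun p ↦ ?_, (Measure.comp_congr φ_ae_eq).trans (by simp)⟩
  rw [Kernel.piecewise_apply]
  split_ifs with hp
  · have hp : p.1 = p.2 := hp
    rw [hp]
    exact IsUnitFlow.zero p.2
  · exact IsUnitFlow.dirac p.1 p.2

theorem triangle [StandardBorelSpace J] {κ : FiniteMeasure (J × J × J)}
    {ν₁₂ ν₂₃ : FiniteMeasure (J × J)} (h₁₂ : Routes (κ.map fun t ↦ (t.1, t.2.1)) ν₁₂)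
    (h₂₃ : Routes (κ.map fun t ↦ t.2) ν₂₃) :
    Routes (κ.map fun t ↦ (t.1, t.2.2)) (ν₁₂ + ν₂₃) := by
  obtain ⟨φ₁₂, hφ₁₂, hν₁₂⟩ := h₁₂
  obtain ⟨φ₂₃, hφ₂₃, hν₂₃⟩ := h₂₃
  let ρ : Measure ((J × J) × J) :=
    (κ : Measure (J × J × J)).map fun t ↦ ((t.1, t.2.2), t.2.1)
  have ρ_map₁₂ : ρ.map (fun q ↦ (q.1.1, q.2)) = (κ.map fun t ↦ (t.1, t.2.1)) :=
    Measure.map_map (by fun_prop) (by fun_prop)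
  have ρ_map₂₃ : ρ.map (fun q ↦ (q.2, q.1.2)) = (κ.map fun t ↦ t.2) :=
    Measure.map_map (by fun_prop) (by fun_prop)
  refine of_mixture (ρ := ρ)
    (Φ := φ₁₂.comap (fun q ↦ (q.1.1, q.2)) (by fun_prop) +
      φ₂₃.comap (fun q ↦ (q.2, q.1.2)) (by fun_prop)) (fun q ↦ ?_) ?_ ?_
  · exact (hφ₁₂ (q.1.1, q.2)).add (hφ₂₃ (q.2, q.1.2))
  · exact Measure.fst_map_prodMk (by fun_prop)
  · rw [Measure.add_comp, ← comp_map_eq_comap_comp, ← comp_map_eq_comap_comp, ρ_map₁₂, ρ_map₂₃,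
      hν₁₂, hν₂₃, FiniteMeasure.toMeasure_add]

end Routes

end Flows

section RoutingCosts

variable {J : Type*} [MeasurableSpace J]

instance (μ : FiniteMeasure (J × J)) : Nonempty {ν // Routes μ ν} :=
  ⟨⟨μ, Routes.refl μ⟩⟩

/-- The infimum of the costs of routing the demand `μ`, where a load `ν` costs `l ν`. -/
noncomputable def routingCost (l : FiniteMeasure (J × J) →ₗ[ℝ≥0] ℝ≥0) (μ : FiniteMeasure (J × J)) :
    ℝ≥0 :=
  ⨅ ν : {ν // Routes μ ν}, l ν

variable (l : FiniteMeasure (J × J) →ₗ[ℝ≥0] ℝ≥0)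

variable {l} in
theorem routingCost_le {μ ν : FiniteMeasure (J × J)} (h : Routes μ ν) : routingCost l μ ≤ l ν :=
  ciInf_le' (fun ν : {ν // Routes μ ν} ↦ l ν) ⟨ν, h⟩

variable {l} in
theorem le_routingCost {μ : FiniteMeasure (J × J)} {c : ℝ≥0} (h : ∀ ν, Routes μ ν → c ≤ l ν) :
    c ≤ routingCost l μ :=
  le_ciInf fun ν ↦ h ν ν.2

theorem routingCost_add (μ μ' : FiniteMeasure (J × J)) :
    routingCost l (μ + μ') = routingCost l μ + routingCost l μ' := by
  apply le_antisymm
  · refine NNReal.le_iInf_add_iInf fun ν ν' ↦ ?_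
    rw [← map_add]
    exact routingCost_le (ν.2.add ν'.2)
  · refine le_routingCost fun ν h ↦ ?_
    obtain ⟨ν₁, ν₂, h₁, h₂, rfl⟩ := h.exists_add_of_add
    rw [map_add]
    exact add_le_add (routingCost_le h₁) (routingCost_le h₂)

theorem routingCost_smul_le (r : ℝ≥0) (μ : FiniteMeasure (J × J)) :
    routingCost l (r • μ) ≤ r * routingCost l μ := by
  rw [routingCost, routingCost, NNReal.mul_iInf]
  refine le_ciInf fun ν ↦ ?_
  rw [← smul_eq_mul, ← map_smul]
  exact routingCost_le (ν.2.smul r)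

/-- `routingCost` as a linear map. -/
noncomputable def routingCostₗ : FiniteMeasure (J × J) →ₗ[ℝ≥0] ℝ≥0 where
  toFun := routingCost l
  map_add' := routingCost_add l
  map_smul' r μ := by
    refine (routingCost_smul_le l r μ).antisymm ?_
    rcases eq_or_ne r 0 with rfl | hr
    · simp
    · calc r * routingCost l μ = r * routingCost l (r⁻¹ • r • μ) := by rw [inv_smul_smul₀ hr]
        _ ≤ r * (r⁻¹ * routingCost l (r • μ)) := by gcongr; exact routingCost_smul_le l ..
        _ = routingCost l (r • μ) := mul_inv_cancel_left₀ hr _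

theorem routingCost_eq_zero_of_diagonal [MeasurableEq J] {μ : FiniteMeasure (J × J)}
    (hμ : (μ : Measure (J × J)) {p | p.1 = p.2}ᶜ = 0) : routingCost l μ = 0 :=
  le_zero_iff.mp (map_zero l ▸ routingCost_le (Routes.zero_of_diagonal hμ))

theorem routingCost_triangle [StandardBorelSpace J] (κ : FiniteMeasure (J × J × J)) :
    routingCost l (κ.map fun t ↦ (t.1, t.2.2)) ≤
      routingCost l (κ.map fun t ↦ (t.1, t.2.1)) + routingCost l (κ.map fun t ↦ t.2) := by
  refine NNReal.le_iInf_add_iInf fun ν ν' ↦ ?_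
  rw [← map_add]
  exact routingCost_le (ν.2.triangle ν'.2)

/-- The cost of routing a demand and its reversal. -/
noncomputable def symmRoutingCost : FiniteMeasure (J × J) →ₗ[ℝ≥0] ℝ≥0 :=
  routingCostₗ l + routingCostₗ l ∘ₗ FiniteMeasure.mapHom measurable_swap

theorem symmRoutingCost_apply (μ : FiniteMeasure (J × J)) :
    symmRoutingCost l μ = routingCost l μ + routingCost l (μ.map Prod.swap) :=
  rfl

theorem symmRoutingCost_map_swap (μ : FiniteMeasure (J × J)) :
    symmRoutingCost l (μ.map Prod.swap) = symmRoutingCost l μ := by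
  have map_swap_map_swap : (μ.map Prod.swap).map Prod.swap = μ := by
    rw [map_map_finiteMeasure μ measurable_swap measurable_swap, Prod.swap_swap_eq]
    exact FiniteMeasure.toMeasure_injective Measure.map_id
  rw [symmRoutingCost_apply, symmRoutingCost_apply, map_swap_map_swap, add_comm]

theorem symmRoutingCost_triangle [StandardBorelSpace J] (κ : FiniteMeasure (J × J × J)) :
    symmRoutingCost l (κ.map fun t ↦ (t.1, t.2.2)) ≤
      symmRoutingCost l (κ.map fun t ↦ (t.1, t.2.1)) + symmRoutingCost l (κ.map fun t ↦ t.2) := by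
  have map_reverse {f g : J × J × J → J × J} (hf : Measurable f)
      (hg : ∀ t, g (t.2.2, t.2.1, t.1) = (f t).swap) (hg' : Measurable g) :
      (κ.map f).map Prod.swap = (κ.map fun t ↦ (t.2.2, t.2.1, t.1)).map g := by
    rw [map_map_finiteMeasure κ hf measurable_swap, map_map_finiteMeasure κ (by fun_prop) hg']
    exact congrArg κ.map (funext fun t ↦ (hg t).symm)
  have reverse_triangle := routingCost_triangle l (κ.map fun t ↦ (t.2.2, t.2.1, t.1))
  rw [← map_reverse (f := fun t ↦ (t.1, t.2.2)) (by fun_prop) (fun _ ↦ rfl) (by fun_prop),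
    ← map_reverse (f := fun t ↦ t.2) (by fun_prop) (fun _ ↦ rfl) (by fun_prop),
    ← map_reverse (f := fun t ↦ (t.1, t.2.1)) (by fun_prop) (fun _ ↦ rfl) (by fun_prop)]
    at reverse_triangle
  simp only [symmRoutingCost_apply]
  linarith [routingCost_triangle l κ]

end RoutingCosts

section Metrical

variable {J : Type*} [MeasurableSpace J]

theorem isMetrical_signedExtension {d : FiniteMeasure (J × J) →ₗ[ℝ≥0] ℝ≥0} {C : ℝ≥0}
    (d_le : ∀ μ, d μ ≤ C * μ.mass)
    (d_diagonal : ∀ μ : FiniteMeasure (J × J),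
      (μ : Measure (J × J)) {p | p.1 = p.2}ᶜ = 0 → d μ = 0)
    (d_swap : ∀ μ, d (μ.map Prod.swap) = d μ)
    (d_triangle : ∀ κ : FiniteMeasure (J × J × J), d (κ.map fun t ↦ (t.1, t.2.2)) ≤
      d (κ.map fun t ↦ (t.1, t.2.1)) + d (κ.map fun t ↦ t.2)) :
    IsMetrical (signedExtension d) := by
  refine ⟨⟨C, abs_signedExtension_le d_le⟩, fun s hs ↦ ?_, fun s ↦ ?_, fun κ _ ↦ ?_⟩
  · obtain ⟨hs_pos, hs_neg⟩ := add_eq_zero.mp hs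
    change (d (positivePart s) - d (negativePart s) : ℝ) = 0
    rw [d_diagonal (positivePart s) hs_pos, d_diagonal (negativePart s) hs_neg, sub_self]
  · suffices signedExtension d ∘ₗ VectorMeasure.mapₗ Prod.swap = signedExtension d from
      LinearMap.congr_fun this s
    refine linearMap_ext_of_toSignedMeasureₗ fun μ ↦ ?_
    change signedExtension d ((toSignedMeasureₗ μ).map Prod.swap) = _
    rw [map_toSignedMeasureₗ _ measurable_swap, signedExtension_toSignedMeasureₗ,
      signedExtension_toSignedMeasureₗ, d_swap]
  · have h := d_triangle ⟨κ, ‹_›⟩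
    rw [← NNReal.coe_le_coe, NNReal.coe_add] at h
    simp only [← signedExtension_toSignedMeasureₗ] at h
    exact h

theorem isMetrical_signedExtension_symmRoutingCost [StandardBorelSpace J]
    {l : FiniteMeasure (J × J) →ₗ[ℝ≥0] ℝ≥0} (hl : ∀ μ, l μ ≤ μ.mass) :
    IsMetrical (signedExtension (symmRoutingCost l)) := by
  have routingCost_le_mass (μ : FiniteMeasure (J × J)) : routingCost l μ ≤ μ.mass :=
    (routingCost_le (Routes.refl μ)).trans (hl μ)
  refine isMetrical_signedExtension (C := 2) (fun μ ↦ ?_) (fun μ hμ ↦ ?_)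
    (symmRoutingCost_map_swap l) (symmRoutingCost_triangle l)
  · rw [symmRoutingCost_apply, two_mul]
    exact add_le_add (routingCost_le_mass μ)
      ((routingCost_le_mass _).trans (FiniteMeasure.mass_map_le _ _))
  · have hμ_swap : (μ.map Prod.swap : Measure (J × J)) {p | p.1 = p.2}ᶜ = 0 := by
      have preimage_swap : Prod.swap ⁻¹' (diagonal J)ᶜ = {p | p.1 = p.2}ᶜ :=
        Set.ext fun p ↦ not_congr eq_comm
      refine (Measure.map_apply measurable_swap measurableSet_diagonal.compl).trans ?_
      rw [preimage_swap, hμ]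
    rw [symmRoutingCost_apply, routingCost_eq_zero_of_diagonal l hμ,
      routingCost_eq_zero_of_diagonal l hμ_swap, add_zero]

theorem compProd_map_add_eq {φ : Kernel (J × J) (J × J)} [IsSFiniteKernel φ]
    (hφ : ∀ p, IsUnitFlow p.1 p.2 (φ p)) (μ : Measure (J × J)) [SFinite μ] :
    (μ ⊗ₘ φ).map (fun q ↦ (q.1.1, q.2.1)) + μ =
      (μ ⊗ₘ φ).map (fun q ↦ (q.1.1, q.2.2)) + μ.map fun p ↦ (p.1, p.1) := by
  have kernel_eq : φ.map Prod.fst + Kernel.deterministic Prod.snd measurable_snd =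
      φ.map Prod.snd + Kernel.deterministic Prod.fst measurable_fst := by
    ext1 p
    rw [add_apply, add_apply, Kernel.map_apply _ measurable_fst, Kernel.map_apply _ measurable_snd]
    exact hφ p
  have measure_eq := congrArg
    (fun κ : Kernel (J × J) J ↦ (μ ⊗ₘ κ).map (Prod.map Prod.fst id)) kernel_eq
  simp only [Measure.compProd_add_right, Measure.compProd_map measurable_fst,
    Measure.compProd_map measurable_snd, Measure.compProd_deterministic] at measure_eq
  rw [Measure.map_add _ _ (by fun_prop), Measure.map_add _ _ (by fun_prop),
    Measure.map_map (by fun_prop) (by fun_prop), Measure.map_map (by fun_prop) (by fun_prop),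
    Measure.map_map (by fun_prop) (by fun_prop), Measure.map_map (by fun_prop) (by fun_prop)]
    at measure_eq
  exact (congrArg _ Measure.map_id.symm).trans measure_eq

namespace IsMetrical

variable {D : SignedMeasure (J × J) →ₗ[ℝ] ℝ}

theorem eq_zero_of_diagonal (hD : IsMetrical D) {μ : FiniteMeasure (J × J)}
    (hμ : (μ : Measure (J × J)) {p | p.1 = p.2}ᶜ = 0) : D (toSignedMeasureₗ μ) = 0 := by
  apply hD.2.1
  rwa [totalVariation_toSignedMeasureₗ]

theorem map_diagonal_eq_zero [MeasurableEq J] (hD : IsMetrical D) (μ : FiniteMeasure J) :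
    D (toSignedMeasureₗ (μ.map fun x ↦ (x, x))) = 0 := by
  apply hD.eq_zero_of_diagonal
  refine (Measure.map_apply (by fun_prop) measurableSet_diagonal.compl).trans ?_
  simp [diagonal]

theorem map_swap (hD : IsMetrical D) (μ : FiniteMeasure (J × J)) :
    D (toSignedMeasureₗ (μ.map Prod.swap)) = D (toSignedMeasureₗ μ) := by
  rw [← map_toSignedMeasureₗ μ measurable_swap, hD.2.2.1]

theorem triangle (hD : IsMetrical D) (κ : FiniteMeasure (J × J × J)) :
    D (toSignedMeasureₗ (κ.map fun t ↦ (t.1, t.2.2))) ≤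
      D (toSignedMeasureₗ (κ.map fun t ↦ (t.1, t.2.1))) +
        D (toSignedMeasureₗ (κ.map fun t ↦ t.2)) :=
  hD.2.2.2 κ

theorem nonneg [MeasurableEq J] (hD : IsMetrical D) (μ : FiniteMeasure (J × J)) :
    0 ≤ D (toSignedMeasureₗ μ) := by
  let κ : FiniteMeasure (J × J × J) := μ.map fun p ↦ (p.1, p.2, p.1)
  have κ_map₁₃ : κ.map (fun t ↦ (t.1, t.2.2)) = (μ.map Prod.fst).map fun x ↦ (x, x) := by
    rw [map_map_finiteMeasure μ (by fun_prop) (by fun_prop),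
      map_map_finiteMeasure μ (by fun_prop) (by fun_prop)]
    rfl
  have κ_map₁₂ : κ.map (fun t ↦ (t.1, t.2.1)) = μ :=
    (map_map_finiteMeasure μ (by fun_prop) (by fun_prop)).trans
      (FiniteMeasure.toMeasure_injective Measure.map_id)
  have κ_map₂₃ : κ.map (fun t ↦ t.2) = μ.map Prod.swap :=
    map_map_finiteMeasure μ (by fun_prop) (by fun_prop)
  have h := hD.triangle κ
  rw [κ_map₁₃, κ_map₁₂, κ_map₂₃, hD.map_diagonal_eq_zero, hD.map_swap] at h
  linarith

theorem exists_forall_le_add [MeasurableEq J] (hD : IsMetrical D) :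
    ∃ C : ℝ, 0 < C ∧ ∀ μ ν : FiniteMeasure (J × J), D (toSignedMeasureₗ μ) ≤
      D (toSignedMeasureₗ ν) + C * (μ - ν : Measure (J × J)).real univ := by
  obtain ⟨C, hC⟩ := hD.1
  refine ⟨max C 1, by positivity, fun μ ν ↦ ?_⟩
  let excess : FiniteMeasure (J × J) := ⟨(μ : Measure (J × J)) - ν, inferInstance⟩
  let deficit : FiniteMeasure (J × J) := ⟨(ν : Measure (J × J)) - μ, inferInstance⟩
  have balance : μ + deficit = ν + excess :=
    FiniteMeasure.toMeasure_injective (measure_add_sub_comm (μ : Measure (J × J)) ν)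
  have excess_le : D (toSignedMeasureₗ excess) ≤ max C 1 * (μ - ν : Measure (J × J)).real univ := by
    have h := hC (toSignedMeasureₗ excess)
    rw [totalVariation_toSignedMeasureₗ] at h
    exact (le_abs_self _).trans (h.trans (by gcongr; exacts [le_max_left _ _, le_rfl]))
  have D_balance := congrArg (fun ρ ↦ D (toSignedMeasureₗ ρ)) balance
  simp only [map_add] at D_balance
  linarith [hD.nonneg deficit]

theorem le_of_routes [MeasurableEq J] (hD : IsMetrical D) {μ ν : FiniteMeasure (J × J)}
    (h : Routes μ ν) : D (toSignedMeasureₗ μ) ≤ D (toSignedMeasureₗ ν) := by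
  obtain ⟨φ, φ_finite, hφ, hν⟩ := h.exists_isFiniteMeasure
  have : IsSFiniteKernel φ := isSFiniteKernel_of_forall_isFiniteMeasure φ φ_finite
  have snd_compProd : ((μ : Measure (J × J)) ⊗ₘ φ).snd = ν := (Measure.snd_compProd ..).trans hν
  have : IsFiniteMeasure ((μ : Measure (J × J)) ⊗ₘ φ) := by
    refine ⟨?_⟩
    rw [← Measure.snd_univ, snd_compProd]
    exact measure_lt_top _ _
  let ρ : FiniteMeasure ((J × J) × (J × J)) := ⟨(μ : Measure (J × J)) ⊗ₘ φ, this⟩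
  let κ : FiniteMeasure (J × J × J) := ρ.map fun q ↦ (q.1.1, q.2)
  have κ_map₂₃ : κ.map (fun t ↦ t.2) = ν :=
    (map_map_finiteMeasure ρ (by fun_prop) (by fun_prop)).trans
      (FiniteMeasure.toMeasure_injective snd_compProd)
  have conservation : κ.map (fun t ↦ (t.1, t.2.1)) + μ =
      κ.map (fun t ↦ (t.1, t.2.2)) + (μ.map Prod.fst).map fun x ↦ (x, x) := by
    rw [map_map_finiteMeasure ρ (by fun_prop) (by fun_prop),
      map_map_finiteMeasure ρ (by fun_prop) (by fun_prop),
      map_map_finiteMeasure μ (by fun_prop) (by fun_prop)]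
    exact FiniteMeasure.toMeasure_injective (compProd_map_add_eq hφ μ)
  have D_conservation := congrArg (fun ρ ↦ D (toSignedMeasureₗ ρ)) conservation
  simp only [map_add, hD.map_diagonal_eq_zero, add_zero] at D_conservation
  have h_triangle := hD.triangle κ
  rw [κ_map₂₃] at h_triangle
  linarith

end IsMetrical

end Metrical

section MulticommodityFlow

variable {J : Type*} [MeasurableSpace J]

theorem exists_flow_overload_lt_iff (σ ψ : FiniteMeasure (J × J)) (ε : ℝ≥0∞) :
    (∃ φ : J × J → Measure (J × J), (∀ p, IsFiniteMeasure (φ p)) ∧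
      (∀ U : Set (J × J), MeasurableSet U → Measurable fun p ↦ φ p U) ∧
      (∀ p, IsUnitFlow p.1 p.2 (φ p)) ∧
      (⨆ (S : Set (J × J)) (_ : MeasurableSet S),
        ((∫⁻ p, φ p S ∂(σ : Measure (J × J))) - (ψ : Measure (J × J)) S)) < ε) ↔
      ∃ ν, Routes σ ν ∧ (ν - ψ : Measure (J × J)) univ < ε := by
  have overload_eq (φ : Kernel (J × J) (J × J)) :
      ⨆ (S : Set (J × J)) (_ : MeasurableSet S),
        ((∫⁻ p, φ p S ∂(σ : Measure (J × J))) - (ψ : Measure (J × J)) S) =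
      ⨆ (S : Set (J × J)) (_ : MeasurableSet S),
        ((φ ∘ₘ (σ : Measure (J × J))) S - (ψ : Measure (J × J)) S) :=
    iSup_congr fun S ↦ iSup_congr fun hS ↦ by rw [Measure.bind_apply hS φ.aemeasurable]
  constructor
  · rintro ⟨φ, -, φ_measurable, hφ, overload_lt⟩
    let φ' : Kernel (J × J) (J × J) := ⟨φ, Measure.measurable_of_measurable_coe φ φ_measurable⟩
    change ⨆ (S : Set (J × J)) (_ : MeasurableSet S),
        ((∫⁻ p, φ' p S ∂(σ : Measure (J × J))) - (ψ : Measure (J × J)) S) < ε at overload_lt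
    rw [overload_eq] at overload_lt
    have load_finite : IsFiniteMeasure (φ' ∘ₘ (σ : Measure (J × J))) := by
      have excess_lt_top : (φ' ∘ₘ (σ : Measure (J × J))) univ - (ψ : Measure (J × J)) univ < ∞ :=
        ((le_iSup₂_of_le univ MeasurableSet.univ le_rfl).trans_lt overload_lt).trans_le le_top
      exact ⟨(tsub_le_iff_right.mp le_rfl).trans_lt
        (ENNReal.add_lt_top.mpr ⟨excess_lt_top, measure_lt_top _ _⟩)⟩
    rw [iSup_sub_eq_sub_apply_univ] at overload_lt
    exact ⟨⟨_, load_finite⟩, ⟨φ', hφ, rfl⟩, overload_lt⟩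
  · rintro ⟨ν, h, overload_lt⟩
    obtain ⟨φ, φ_finite, hφ, hν⟩ := h.exists_isFiniteMeasure
    refine ⟨φ, φ_finite, fun U hU ↦ φ.measurable_coe hU, hφ, ?_⟩
    rwa [overload_eq, hν, iSup_sub_eq_sub_apply_univ]

theorem IsMetrical.le_of_forall_exists_routes [MeasurableEq J]
    {D : SignedMeasure (J × J) →ₗ[ℝ] ℝ} (hD : IsMetrical D) {σ ψ : FiniteMeasure (J × J)}
    (h : ∀ ε : ℝ, 0 < ε → ∃ ν, Routes σ ν ∧ (ν - ψ : Measure (J × J)) univ < ENNReal.ofReal ε) :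
    D (toSignedMeasureₗ σ) ≤ D (toSignedMeasureₗ ψ) := by
  obtain ⟨C, hC, D_le⟩ := hD.exists_forall_le_add
  refine le_of_forall_pos_le_add fun δ hδ ↦ ?_
  obtain ⟨ν, hν, overload_lt⟩ := h (δ / C) (by positivity)
  have overload_real_lt : (ν - ψ : Measure (J × J)).real univ < δ / C :=
    (ENNReal.lt_ofReal_iff_toReal_lt (measure_ne_top _ _)).mp overload_lt
  calc D (toSignedMeasureₗ σ) ≤ D (toSignedMeasureₗ ν) := hD.le_of_routes hν
    _ ≤ D (toSignedMeasureₗ ψ) + C * (ν - ψ : Measure (J × J)).real univ := D_le ν ψ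
    _ ≤ D (toSignedMeasureₗ ψ) + δ := by
      gcongr
      exact ((lt_div_iff₀' hC).mp overload_real_lt).le

theorem exists_isMetrical_lt [StandardBorelSpace J] {σ ψ : FiniteMeasure (J × J)}
    (hσ : σ.map Prod.swap = σ) (hψ : ψ.map Prod.swap = ψ) {c : ℝ≥0} (hc : 0 < c)
    (overload_ge : ∀ ν, Routes σ ν → c ≤ (ν - ψ : Measure (J × J)).real univ) :
    ∃ D : SignedMeasure (J × J) →ₗ[ℝ] ℝ, IsMetrical D ∧
      D (toSignedMeasureₗ ψ) < D (toSignedMeasureₗ σ) := by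
  obtain ⟨l, l_le_mass, hl⟩ :=
    exists_linearMap_forall_add_le (Routes.convex σ) ⟨σ, Routes.refl σ⟩ ψ overload_ge
  refine ⟨_, isMetrical_signedExtension_symmRoutingCost l_le_mass, ?_⟩
  have cost_lt : routingCost l ψ < routingCost l σ :=
    calc routingCost l ψ ≤ l ψ := routingCost_le (Routes.refl ψ)
      _ < l ψ + c := lt_add_of_pos_right _ hc
      _ ≤ routingCost l σ := le_routingCost hl
  rw [signedExtension_toSignedMeasureₗ, signedExtension_toSignedMeasureₗ, NNReal.coe_lt_coe,
    symmRoutingCost_apply, symmRoutingCost_apply, hσ, hψ]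
  exact add_lt_add cost_lt cost_lt

end MulticommodityFlow

/-- **Multicommodity Flow Theorem for measures.** Let `σ` (demands) and `ψ` (capacities) be
symmetric finite nonnegative Borel measures on `J × J`. There is a multicommodity flow for `σ`
with arbitrarily small overload over `ψ` iff `D(σ) ≤ D(ψ)` for every metrical bounded linear
functional `D`. A multicommodity flow is a measurable family `(φ_{st})` of finite measures,
each an `s`-`t` flow of value `1`; its overload over `ψ` is the total mass of the positive
part of (total load − ψ), i.e. `sup_S (∫ φ_{st}(S) dσ(s,t) − ψ(S))`. -/
theorem stmt_13 {J : Type*} [MeasurableSpace J] [StandardBorelSpace J]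
    (σ ψ : Measure (J × J)) [IsFiniteMeasure σ] [IsFiniteMeasure ψ]
    (hσ : σ.map Prod.swap = σ) (hψ : ψ.map Prod.swap = ψ) :
    (∀ ε : ℝ, 0 < ε →
      ∃ φ : J × J → Measure (J × J),
        (∀ p, IsFiniteMeasure (φ p)) ∧
        (∀ U : Set (J × J), MeasurableSet U → Measurable fun p => φ p U) ∧
        (∀ p : J × J, (φ p).fst + Measure.dirac p.2 = (φ p).snd + Measure.dirac p.1) ∧
        (⨆ (S : Set (J × J)) (_ : MeasurableSet S),
          ((∫⁻ p, φ p S ∂σ) - ψ S)) < ENNReal.ofReal ε) ↔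
      (∀ D : SignedMeasure (J × J) →ₗ[ℝ] ℝ, IsMetrical D →
        D σ.toSignedMeasure ≤ D ψ.toSignedMeasure) := by
  let σ' : FiniteMeasure (J × J) := ⟨σ, ‹_›⟩
  let ψ' : FiniteMeasure (J × J) := ⟨ψ, ‹_›⟩
  refine (forall₂_congr fun ε _ ↦ exists_flow_overload_lt_iff σ' ψ' (ENNReal.ofReal ε)).trans
    ⟨fun h D hD ↦ hD.le_of_forall_exists_routes h, fun h ↦ ?_⟩
  by_contra! ⟨ε, ε_pos, overload_ge⟩
  obtain ⟨D, hD, D_lt⟩ := exists_isMetrical_lt (σ := σ') (ψ := ψ')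
    (FiniteMeasure.toMeasure_injective hσ) (FiniteMeasure.toMeasure_injective hψ)
    (Real.toNNReal_pos.mpr ε_pos) fun ν hν ↦ by
      rw [Real.coe_toNNReal _ ε_pos.le]
      exact (ENNReal.ofReal_le_iff_le_toReal (measure_ne_top _ _)).mp (overload_ge ν hν)
  exact (h D hD).not_gt D_lt
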